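/- Let X₁, X₂ be finite sets, n ≥ 1, M₁, M₂ ≥ 1, x₁, …, x_{M₁} ∈ X₁ⁿ, y₁, …, y_{M₂} ∈ X₂ⁿ. Let Q : X₁²×X₂² → ℝ satisfy ‖Q‖_∞ ≤ 1 and ⟨P^{⊗2}⊗R^{⊗2}, Q⟩ ≥ 0 for every P ∈ Δ(X₁), R ∈ Δ(X₂). Let D̄ ∈ Δ(X₁²×X₂²) be symmetric (invariant under swapping the two X₁-coordinates, the two X₂-coordinates, and both). Suppose that for all 1 ≤ i₁ < i₂ ≤ M₁ and 1 ≤ j₁ < j₂ ≤ M₂ one has d₁(τ_{x_{i₁}, x_{i₂}, y_{j₁}, y_{j₂}}, D̄) ≤ β, and that ⟨D̄, Q⟩ ≤ −ε′ with δ := ε′ − β > 0. Then (M₁−1)(M₂−1)·δ ≤ M₁ + M₂ + 1; in particular, min{M₁, M₂} ≤ 1 + 6/δ. -/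

import Mathlib

/-- `P` is a probability distribution on the finite set `X`. -/
def IsDist {X : Type*} [Fintype X] (P : X → ℝ) : Prop :=
  (∀ x, 0 ≤ P x) ∧ ∑ x, P x = 1

/-- The type (empirical distribution) of a length-`n` vector `v` over alphabet `X`. -/
noncomputable def typeOf {X : Type*} [DecidableEq X] {n : ℕ} (v : Fin n → X) : X → ℝ :=
  fun a => ((Finset.univ.filter (fun j => v j = a)).card : ℝ) / n

theorem typeOf_sum_aux {X : Type*} [Fintype X] [DecidableEq X] {n : ℕ} (v : Fin n → X)
    (g : X → ℝ) : ∑ z, typeOf v z * g z = (∑ k, g (v k)) / n := by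
  have h : ∑ k, g (v k) = ∑ z, ∑ k ∈ Finset.univ.filter (fun j => v j = z), g (v k) :=
    (Finset.sum_fiberwise Finset.univ v (fun k => g (v k))).symm
  rw [h, Finset.sum_div]
  refine Finset.sum_congr rfl fun z _ => ?_
  have h2 : ∑ k ∈ Finset.univ.filter (fun j => v j = z), g (v k)
      = ∑ k ∈ Finset.univ.filter (fun j => v j = z), g z :=
    Finset.sum_congr rfl fun k hk => by rw [(Finset.mem_filter.mp hk).2]
  rw [h2, Finset.sum_const, nsmul_eq_mul, typeOf]
  ring

theorem typeOf_isDist_aux {X : Type*} [Fintype X] [DecidableEq X] {n : ℕ} (hn : 1 ≤ n)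
    (v : Fin n → X) : IsDist (typeOf v) := by
  refine ⟨fun a => by unfold typeOf; positivity, ?_⟩
  have h := typeOf_sum_aux v (fun _ => 1)
  have hn' : (n : ℝ) ≠ 0 := by positivity
  simpa [hn'] using h

theorem typeOf_equiv_aux {Z : Type*} [Fintype Z] [DecidableEq Z] {n : ℕ} (v w : Fin n → Z)
    (e : Z ≃ Z) (D : Z → ℝ) (hD : ∀ z, D (e z) = D z) (hw : ∀ k, w k = e (v k)) :
    ∑ z, |typeOf w z - D z| = ∑ z, |typeOf v z - D z| := by
  rw [← Equiv.sum_comp e]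
  refine Finset.sum_congr rfl fun z _ => ?_
  rw [hD]
  simp [typeOf, hw]

theorem offdiag_aux (M : ℕ) :
    ∑ i : Fin M, ∑ j : Fin M, (if i = j then (0 : ℝ) else 1) = M * (M - 1) := by
  have h : ∀ i j : Fin M, (if i = j then (0 : ℝ) else 1) = 1 - if i = j then 1 else 0 := by
    intro i j; split_ifs <;> norm_num
  simp_rw [h, Finset.sum_sub_distrib]
  simp
  ring

theorem nonneg_aux {X₁ X₂ : Type*} [Fintype X₁] [DecidableEq X₁] [Fintype X₂] [DecidableEq X₂]
    {M₁ M₂ : ℕ} (hM₁ : 1 ≤ M₁) (hM₂ : 1 ≤ M₂) (u : Fin M₁ → X₁) (w : Fin M₂ → X₂)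
    (Q : X₁ × X₁ × X₂ × X₂ → ℝ)
    (hQgood : ∀ (P : X₁ → ℝ) (R : X₂ → ℝ), IsDist P → IsDist R →
      0 ≤ ∑ z : X₁ × X₁ × X₂ × X₂, P z.1 * P z.2.1 * R z.2.2.1 * R z.2.2.2 * Q z) :
    0 ≤ ∑ i₁, ∑ i₂, ∑ j₁, ∑ j₂, Q (u i₁, u i₂, w j₁, w j₂) := by
  have h := hQgood _ _ (typeOf_isDist_aux hM₁ u) (typeOf_isDist_aux hM₂ w)
  simp only [Fintype.sum_prod_type, mul_assoc, ← Finset.mul_sum] at h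
  simp only [typeOf_sum_aux, ← Finset.sum_div] at h
  have h1 : (0 : ℝ) < M₁ := by positivity
  have h2 : (0 : ℝ) < M₂ := by positivity
  have h3 := mul_nonneg h (by positivity : (0 : ℝ) ≤ M₁ * M₁ * M₂ * M₂)
  field_simp at h3
  exact h3

theorem stmt_16 (X₁ X₂ : Type*) [Fintype X₁] [DecidableEq X₁] [Fintype X₂] [DecidableEq X₂]
    (n M₁ M₂ : ℕ) (hn : 1 ≤ n) (hM₁ : 1 ≤ M₁) (hM₂ : 1 ≤ M₂)
    (x : Fin M₁ → Fin n → X₁) (y : Fin M₂ → Fin n → X₂)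
    (Q : X₁ × X₁ × X₂ × X₂ → ℝ) (hQ : ∀ z, |Q z| ≤ 1)
    (hQgood : ∀ (P : X₁ → ℝ) (R : X₂ → ℝ), IsDist P → IsDist R →
      0 ≤ ∑ z : X₁ × X₁ × X₂ × X₂, P z.1 * P z.2.1 * R z.2.2.1 * R z.2.2.2 * Q z)
    (Dbar : X₁ × X₁ × X₂ × X₂ → ℝ) (hDbar : IsDist Dbar)
    (hsym : ∀ a₁ a₂ b₁ b₂,
      Dbar (a₁, a₂, b₁, b₂) = Dbar (a₂, a₁, b₁, b₂)
      ∧ Dbar (a₁, a₂, b₁, b₂) = Dbar (a₁, a₂, b₂, b₁)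
      ∧ Dbar (a₁, a₂, b₁, b₂) = Dbar (a₂, a₁, b₂, b₁))
    (β ε' : ℝ) (hε' : 0 < ε')
    (hclose : ∀ i₁ i₂ : Fin M₁, i₁ < i₂ → ∀ j₁ j₂ : Fin M₂, j₁ < j₂ →
      (∑ z, |typeOf (fun k => (x i₁ k, x i₂ k, y j₁ k, y j₂ k)) z - Dbar z|) ≤ β)
    (hDQ : (∑ z, Dbar z * Q z) ≤ -ε')
    (hδ : 0 < ε' - β) :
    ((M₁ : ℝ) - 1) * ((M₂ : ℝ) - 1) * (ε' - β) ≤ (M₁ : ℝ) + (M₂ : ℝ) + 1 ∧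
    min (M₁ : ℝ) (M₂ : ℝ) ≤ 1 + 6 / (ε' - β) := by
  have hclose' : ∀ i₁ i₂ : Fin M₁, i₁ ≠ i₂ → ∀ j₁ j₂ : Fin M₂, j₁ ≠ j₂ →
      (∑ z, |typeOf (fun k => (x i₁ k, x i₂ k, y j₁ k, y j₂ k)) z - Dbar z|) ≤ β := by
    let e₁ : X₁ × X₁ × X₂ × X₂ ≃ X₁ × X₁ × X₂ × X₂ :=
      ⟨fun z => (z.2.1, z.1, z.2.2), fun z => (z.2.1, z.1, z.2.2), fun _ => rfl, fun _ => rfl⟩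
    let e₂ : X₁ × X₁ × X₂ × X₂ ≃ X₁ × X₁ × X₂ × X₂ :=
      ⟨fun z => (z.1, z.2.1, z.2.2.2, z.2.2.1), fun z => (z.1, z.2.1, z.2.2.2, z.2.2.1),
        fun _ => rfl, fun _ => rfl⟩
    have step : ∀ i₁ i₂ : Fin M₁, i₁ ≠ i₂ → ∀ j₁ j₂ : Fin M₂, j₁ < j₂ →
        (∑ z, |typeOf (fun k => (x i₁ k, x i₂ k, y j₁ k, y j₂ k)) z - Dbar z|) ≤ β := by
      intro i₁ i₂ hi j₁ j₂ hj
      rcases lt_or_gt_of_ne hi with h | h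
      · exact hclose _ _ h _ _ hj
      · rw [typeOf_equiv_aux (fun k => (x i₂ k, x i₁ k, y j₁ k, y j₂ k))
          (fun k => (x i₁ k, x i₂ k, y j₁ k, y j₂ k)) e₁ Dbar
          (fun z => ((hsym z.1 z.2.1 z.2.2.1 z.2.2.2).1).symm) (fun k => rfl)]
        exact hclose _ _ h _ _ hj
    intro i₁ i₂ hi j₁ j₂ hj
    rcases lt_or_gt_of_ne hj with h | h
    · exact step _ _ hi _ _ h
    · rw [typeOf_equiv_aux (fun k => (x i₁ k, x i₂ k, y j₂ k, y j₁ k))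
        (fun k => (x i₁ k, x i₂ k, y j₁ k, y j₂ k)) e₂ Dbar
        (fun z => ((hsym z.1 z.2.1 z.2.2.1 z.2.2.2).2.1).symm) (fun k => rfl)]
      exact step _ _ hi _ _ h
  have hn0 : (0 : ℝ) < n := by positivity
  have hT : ∀ i₁ i₂ j₁ j₂, (∑ k, Q (x i₁ k, x i₂ k, y j₁ k, y j₂ k)) / n
      ≤ 1 - (1 + (ε' - β)) *
        ((if i₁ = i₂ then (0 : ℝ) else 1) * (if j₁ = j₂ then (0 : ℝ) else 1)) := by
    intro i₁ i₂ j₁ j₂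
    have htriv : (∑ k, Q (x i₁ k, x i₂ k, y j₁ k, y j₂ k)) / n ≤ 1 := by
      rw [div_le_one hn0]
      calc _ ≤ ∑ k : Fin n, (1 : ℝ) :=
            Finset.sum_le_sum fun k _ => (abs_le.mp (hQ _)).2
        _ = n := by simp
    by_cases hi : i₁ = i₂
    · simpa [hi] using (hi ▸ htriv)
    by_cases hj : j₁ = j₂
    · simpa [hj] using (hj ▸ htriv)
    have hc := hclose' i₁ i₂ hi j₁ j₂ hj
    rw [← typeOf_sum_aux (fun k => (x i₁ k, x i₂ k, y j₁ k, y j₂ k)) Q]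
    have hle : ∑ z, (typeOf (fun k => (x i₁ k, x i₂ k, y j₁ k, y j₂ k)) z * Q z - Dbar z * Q z)
        ≤ ∑ z, |typeOf (fun k => (x i₁ k, x i₂ k, y j₁ k, y j₂ k)) z - Dbar z| := by
      refine Finset.sum_le_sum fun z _ => ?_
      rw [← sub_mul]
      refine (le_abs_self _).trans ?_
      rw [abs_mul]
      exact mul_le_of_le_one_right (abs_nonneg _) (hQ z)
    rw [Finset.sum_sub_distrib] at hle
    simp only [hi, hj, if_false]
    linarith
  have hlow : 0 ≤ ∑ i₁, ∑ i₂, ∑ j₁, ∑ j₂, (∑ k, Q (x i₁ k, x i₂ k, y j₁ k, y j₂ k)) / n := by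
    have heq : ∑ i₁, ∑ i₂, ∑ j₁, ∑ j₂, (∑ k, Q (x i₁ k, x i₂ k, y j₁ k, y j₂ k)) / n
        = (∑ k, ∑ i₁, ∑ i₂, ∑ j₁, ∑ j₂, Q (x i₁ k, x i₂ k, y j₁ k, y j₂ k)) / n := by
      simp only [← Finset.sum_div]
      congr 1
      symm
      rw [Finset.sum_comm]
      refine Finset.sum_congr rfl fun i₁ _ => ?_
      rw [Finset.sum_comm]
      refine Finset.sum_congr rfl fun i₂ _ => ?_
      rw [Finset.sum_comm]
      refine Finset.sum_congr rfl fun j₁ _ => ?_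
      rw [Finset.sum_comm]
    rw [heq]
    refine div_nonneg (Finset.sum_nonneg fun k _ => ?_) hn0.le
    exact nonneg_aux hM₁ hM₂ (fun i => x i k) (fun j => y j k) Q hQgood
  have hup := hlow.trans (Finset.sum_le_sum fun i₁ _ => Finset.sum_le_sum fun i₂ _ =>
    Finset.sum_le_sum fun j₁ _ => Finset.sum_le_sum fun j₂ _ => hT i₁ i₂ j₁ j₂)
  simp only [Finset.sum_sub_distrib, ← Finset.mul_sum, ← Finset.sum_mul, offdiag_aux] at hup
  simp only [Finset.sum_const, Finset.card_univ, Fintype.card_fin, nsmul_eq_mul, mul_one] at hup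
  have hA : (1 : ℝ) ≤ M₁ := by exact_mod_cast hM₁
  have hB : (1 : ℝ) ≤ M₂ := by exact_mod_cast hM₂
  have hA2 : (1 : ℝ) < M₁ → (2 : ℝ) ≤ M₁ := fun h => by
    have h' : 1 < M₁ := by exact_mod_cast h
    exact_mod_cast h'
  have hB2 : (1 : ℝ) < M₂ → (2 : ℝ) ≤ M₂ := fun h => by
    have h' : 1 < M₂ := by exact_mod_cast h
    exact_mod_cast h'
  clear hT hlow
  generalize (M₁ : ℝ) = A at *
  generalize (M₂ : ℝ) = B at *
  generalize ε' - β = δ at *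
  have hmain : (A - 1) * (B - 1) * δ ≤ A + B + 1 := by
    have hAB : 0 < A * B := by positivity
    have : 0 ≤ (A * B) * (A + B - 1 - (A - 1) * (B - 1) * δ) := by
      refine hup.trans (le_of_eq ?_)
      ring
    have := nonneg_of_mul_nonneg_right this hAB
    linarith
  refine ⟨hmain, ?_⟩
  by_contra! hcon
  obtain ⟨h1, h2⟩ := lt_min_iff.mp hcon
  have h1' : 6 < (A - 1) * δ := by
    rw [← div_lt_iff₀ hδ]; linarith
  have h2' : 6 < (B - 1) * δ := by
    rw [← div_lt_iff₀ hδ]; linarith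
  have h6 : 0 < 6 / δ := by positivity
  have hA3 := hA2 (by linarith)
  have hB3 := hB2 (by linarith)
  have k1 : 6 * (B - 1) ≤ (A - 1) * δ * (B - 1) :=
    mul_le_mul_of_nonneg_right h1'.le (by linarith)
  have k2 : 6 * (A - 1) ≤ (B - 1) * δ * (A - 1) :=
    mul_le_mul_of_nonneg_right h2'.le (by linarith)
  nlinarith
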